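/- arXiv:2308.07987 — 4 statements merged into one kernel-verified Lean document; each statement's English description precedes it below -/
import Mathlib

section
/- Let A ∈ ℝ^{m×n} have unit-norm rows a_1,…,a_m, let x ∈ ℝ^n, b = Ax, and let b̂ = b + c where the corruption c is supported on C ⊆ {1,…,m} with |C| ≤ βm. Fix q ∈ (0,1), α ∈ (0,1] with α(1−q) > β. Let τ ⊆ {1,…,m} be any subset with |τ| = ⌈αm⌉, let v ∈ ℝ^n be arbitrary, and let γ(v) be the q-quantile of the multiset {|⟨a_j, v⟩ − b̂_j| : j ∈ τ}. Then γ(v) ≤ σ_max(A)/√(m[α(1−q) − β]) · ‖v − x‖. -/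
open Finset

/-- The largest singular value of `A`, i.e. `sup_{‖x‖ = 1} ‖A x‖` (Euclidean norms). -/
noncomputable def sigmaMax {m n : ℕ} (A : Matrix (Fin m) (Fin n) ℝ) : ℝ :=
  sSup {r : ℝ | ∃ x : Fin n → ℝ, (∑ j, (x j) ^ 2) = 1 ∧
    r = Real.sqrt (∑ i, (∑ j, A i j * x j) ^ 2)}

/-! At least `(1 - q)|τ|` residuals are `≥ γ`, and all but at most `|C|` of them are absolute values
of entries of `A (v - x)`, since there is no corruption off `C`. The squares of these entries sum to
at least `((1 - q)|τ| - |C|) γ²`, while `‖A (v - x)‖² ≤ σ_max(A)² ‖v - x‖²`. -/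

theorem card_filter_le_card_filter_add_card {ι : Type*} {s C : Finset ι} {p p' : ι → Prop}
    [DecidablePred p] [DecidablePred p'] (h : ∀ i ∉ C, p i → p' i) :
    #{i ∈ s | p i} ≤ #{i ∈ s | p' i} + #C := by
  classical
  calc #{i ∈ s | p i} ≤ #({i ∈ s | p' i} ∪ C) := by
        refine card_le_card fun i hi => ?_
        obtain ⟨his, hpi⟩ := mem_filter.1 hi
        by_cases hiC : i ∈ C
        · exact mem_union_right _ hiC
        · exact mem_union_left _ (mem_filter.2 ⟨his, h i hiC hpi⟩)
    _ ≤ #{i ∈ s | p' i} + #C := card_union_le _ _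

section Quantile

variable {ι R : Type*} [LinearOrder R] {s : Finset ι} {f : ι → R} {q : ℝ} {γ : R}

theorem card_filter_lt_le_of_card_filter_le_eq_floor (hq : 0 ≤ q)
    (h : #{i ∈ s | f i ≤ γ} = ⌊q * (#s : ℝ)⌋₊) : (#{i ∈ s | f i < γ} : ℝ) ≤ q * #s :=
  calc (#{i ∈ s | f i < γ} : ℝ) ≤ #{i ∈ s | f i ≤ γ} := by
        exact_mod_cast card_le_card (monotone_filter_right s fun _ _ => le_of_lt)
    _ = (⌊q * (#s : ℝ)⌋₊ : ℝ) := by rw [h]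
    _ ≤ q * #s := Nat.floor_le (by positivity)

theorem one_sub_mul_card_le_card_filter_le (h : (#{i ∈ s | f i < γ} : ℝ) ≤ q * #s) :
    (1 - q) * #s ≤ (#{i ∈ s | γ ≤ f i} : ℝ) := by
  have hsplit : (#{i ∈ s | f i < γ} : ℝ) + #{i ∈ s | γ ≤ f i} = #s := by
    simp only [← not_lt]
    exact_mod_cast card_filter_add_card_filter_not (s := s) (fun i => f i < γ)
  linarith

end Quantile

section EuclideanNorm

variable {ι : Type*} [Fintype ι] {F : ι → Type*} [∀ i, SeminormedAddCommGroup (F i)]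

theorem mul_sqrt_card_filter_le_norm (s : Finset ι) (e : PiLp 2 F) {γ : ℝ} (hγ : 0 ≤ γ) :
    γ * √(#{i ∈ s | γ ≤ ‖e i‖} : ℝ) ≤ ‖e‖ := by
  refine le_of_sq_le_sq ?_ (norm_nonneg e)
  calc (γ * √(#{i ∈ s | γ ≤ ‖e i‖} : ℝ)) ^ 2 = #{i ∈ s | γ ≤ ‖e i‖} • γ ^ 2 := by
        rw [mul_pow, Real.sq_sqrt (Nat.cast_nonneg _), nsmul_eq_mul, mul_comm]
    _ ≤ ∑ i ∈ s with γ ≤ ‖e i‖, ‖e i‖ ^ 2 :=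
        card_nsmul_le_sum _ _ _ fun i hi => pow_le_pow_left₀ hγ (mem_filter.1 hi).2 2
    _ ≤ ∑ i, ‖e i‖ ^ 2 :=
        sum_le_univ_sum_of_nonneg fun i => sq_nonneg ‖e i‖
    _ = ‖e‖ ^ 2 := (PiLp.norm_sq_eq_of_L2 F e).symm

theorem quantile_mul_sqrt_le_norm_of_eq_off {e r : PiLp 2 F} {C τ : Finset ι}
    (her : ∀ i ∉ C, r i = e i) {q γ : ℝ} (hγ : 0 ≤ γ)
    (hcount : (#{i ∈ τ | ‖r i‖ < γ} : ℝ) ≤ q * #τ) :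
    γ * √((1 - q) * #τ - #C) ≤ ‖e‖ := by
  have hlarge : (1 - q) * #τ - #C ≤ (#{i ∈ τ | γ ≤ ‖e i‖} : ℝ) := by
    have hcorr : (#{i ∈ τ | γ ≤ ‖r i‖} : ℝ) ≤ #{i ∈ τ | γ ≤ ‖e i‖} + #C := by
      exact_mod_cast card_filter_le_card_filter_add_card
        (p := fun i => γ ≤ ‖r i‖) (p' := fun i => γ ≤ ‖e i‖) fun i hi hri => her i hi ▸ hri
    linarith [one_sub_mul_card_le_card_filter_le hcount]
  calc γ * √((1 - q) * #τ - #C) ≤ γ * √(#{i ∈ τ | γ ≤ ‖e i‖} : ℝ) := by gcongr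
    _ ≤ ‖e‖ := mul_sqrt_card_filter_le_norm τ e hγ

-- Counting only the residuals strictly below `γ` allows ties at the quantile.
theorem quantile_bound_general {𝕜 E : Type*} [NontriviallyNormedField 𝕜]
    [SeminormedAddCommGroup E] [NormedSpace 𝕜 E] [∀ i, NormedSpace 𝕜 (F i)]
    (T : E →L[𝕜] PiLp 2 F) (x v : E) (bhat : PiLp 2 F) {C τ : Finset ι}
    (hbhat : ∀ i ∉ C, bhat i = T x i) {α β q γ : ℝ}
    (hC : (#C : ℝ) ≤ β * Fintype.card ι) (hq : q ≤ 1) (hαqβ : β < α * (1 - q))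
    (hτ : α * Fintype.card ι ≤ #τ) (hγmem : ∃ i ∈ τ, ‖T v i - bhat i‖ = γ)
    (hγcount : (#{i ∈ τ | ‖T v i - bhat i‖ < γ} : ℝ) ≤ q * #τ) :
    γ ≤ ‖T‖ / √(Fintype.card ι * (α * (1 - q) - β)) * ‖v - x‖ := by
  obtain ⟨i, -, hiγ⟩ := hγmem
  have hγ : 0 ≤ γ := hiγ ▸ norm_nonneg _
  have hcard : (0 : ℝ) < Fintype.card ι := Nat.cast_pos.2 (Fintype.card_pos_iff.2 ⟨i⟩)
  have hK : 0 < Fintype.card ι * (α * (1 - q) - β) := mul_pos hcard (sub_pos.2 hαqβ)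
  have hclean : Fintype.card ι * (α * (1 - q) - β) ≤ (1 - q) * #τ - #C := by
    linarith [mul_le_mul_of_nonneg_left hτ (sub_nonneg.2 hq)]
  have hoff : ∀ i ∉ C, (T v - bhat) i = T (v - x) i := fun i hi => by
    simp only [map_sub, PiLp.sub_apply, hbhat i hi]
  rw [div_mul_eq_mul_div, le_div_iff₀ (Real.sqrt_pos.2 hK)]
  calc γ * √(Fintype.card ι * (α * (1 - q) - β)) ≤ γ * √((1 - q) * #τ - #C) := by gcongr
    _ ≤ ‖T (v - x)‖ := quantile_mul_sqrt_le_norm_of_eq_off hoff hγ hγcount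
    _ ≤ ‖T‖ * ‖v - x‖ := T.le_opNorm _

end EuclideanNorm

theorem sigmaMax_eq_norm_toEuclideanLin {m n : ℕ} (A : Matrix (Fin m) (Fin n) ℝ) :
    sigmaMax A = ‖A.toEuclideanLin.toContinuousLinearMap‖ := by
  have hnorm {k : ℕ} (y : EuclideanSpace ℝ (Fin k)) : ‖y‖ = √(∑ i, y i ^ 2) := by
    simp only [EuclideanSpace.norm_eq, Real.norm_eq_abs, sq_abs]
  rw [← ContinuousLinearMap.sSup_sphere_eq_norm, sigmaMax]
  congr 1
  ext r
  constructor
  · rintro ⟨x, hx, rfl⟩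
    exact ⟨WithLp.toLp 2 x, by simp [hnorm, hx], hnorm _⟩
  · rintro ⟨x, hx, rfl⟩
    refine ⟨x, ?_, hnorm _⟩
    rwa [mem_sphere_zero_iff_norm, hnorm, Real.sqrt_eq_one] at hx

/-- **Quantile bound (Lemma 1).**  If `A` has unit-norm rows, `b = Ax`, `b̂ = b + c` with `c`
supported on `C`, `|C| ≤ βm`, `q ∈ (0,1)`, `α ∈ (0,1]`, `α(1-q) > β`, `τ` is any sample with
`|τ| = ⌈αm⌉` and `γ` is the `q`-quantile of the residual multiset `{|⟨a_j, v⟩ - b̂_j|}_{j ∈ τ}`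
(i.e. `γ` is one of these residuals and exactly `⌊q|τ|⌋` of them are `≤ γ`), then
`γ ≤ σ_max(A)/√(m[α(1-q) - β]) · ‖v - x‖`. -/
theorem quantile_bound {m n : ℕ}
    (A : Matrix (Fin m) (Fin n) ℝ) (hrows : ∀ i, ∑ j, (A i j) ^ 2 = 1)
    (x : Fin n → ℝ) (b c bhat : Fin m → ℝ)
    (hb : ∀ i, b i = ∑ j, A i j * x j)
    (hbhat : ∀ i, bhat i = b i + c i)
    (C : Finset (Fin m)) (hsupp : ∀ i, c i ≠ 0 → i ∈ C)
    (β : ℝ) (hC : (C.card : ℝ) ≤ β * (m : ℝ))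
    (q : ℝ) (hq0 : 0 < q) (hq1 : q < 1)
    (α : ℝ) (hα0 : 0 < α) (hα1 : α ≤ 1)
    (hαqβ : β < α * (1 - q))
    (τ : Finset (Fin m)) (hτ : τ.card = ⌈α * (m : ℝ)⌉₊)
    (v : Fin n → ℝ) (γ : ℝ)
    (hγmem : ∃ i ∈ τ, |(∑ j, A i j * v j) - bhat i| = γ)
    (hγcount : (τ.filter (fun i => |(∑ j, A i j * v j) - bhat i| ≤ γ)).card
      = ⌊q * (τ.card : ℝ)⌋₊) :
    γ ≤ sigmaMax A / Real.sqrt ((m : ℝ) * (α * (1 - q) - β)) *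
      Real.sqrt (∑ j, (v j - x j) ^ 2) := by
  have huncorrupted : ∀ i ∉ C, bhat i = ∑ j, A i j * x j := fun i hi => by
    rw [hbhat, hb, not_imp_comm.1 (hsupp i) hi, add_zero]
  simpa [sigmaMax_eq_norm_toEuclideanLin, EuclideanSpace.norm_eq] using
    quantile_bound_general A.toEuclideanLin.toContinuousLinearMap (WithLp.toLp 2 x)
      (WithLp.toLp 2 v) (WithLp.toLp 2 bhat) huncorrupted (by simpa using hC) hq1.le hαqβ
      (by simpa [hτ] using Nat.le_ceil _) hγmem
      (card_filter_lt_le_of_card_filter_le_eq_floor hq0.le hγcount)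
end

section
/- Let A ∈ ℝ^{m×n} have unit-norm rows a_1,…,a_m, let x ∈ ℝ^n, b = Ax, and let b̂ = b + c where c is supported on C ⊆ {1,…,m} with |C| ≤ βm. Fix q ∈ (0,1) and α ∈ (0,1] with α(1−q) > β, let τ ⊆ {1,…,m} with |τ| = ⌈αm⌉, let v ∈ ℝ^n, and let γ(v) be the q-quantile of {|⟨a_j, v⟩ − b̂_j| : j ∈ τ}. Then γ(v)² · m[α(1−q) − β] ≤ Σ_{i ∈ τ, i ∉ C} |⟨a_i, v⟩ − b̂_i|². (In particular, at least ⌈αm⌉ − ⌊q⌈αm⌉⌋ of the residuals {|⟨a_j, v⟩ − b̂_j|}_{j ∈ τ} are at least γ(v), and at least m[α(1−q) − β] of these belong to uncorrupted equations.) -/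
open Finset

/-!
At most `q|τ|` of the residuals are at most the quantile `γ`, so at least
`(1 - q)|τ| ≥ (1 - q)αm` of them are at least `γ`. Even if every corrupted equation is among these,
removing the at most `βm` corrupted ones leaves `m(α(1 - q) - β)`, each of which contributes at
least `γ²` to the sum of squares.
-/

section Counting

variable {ι R : Type*}

theorem card_le_card_filter_le_add_card_filter_ge [LinearOrder R] (s : Finset ι) (f : ι → R)
    (a : R) : #s ≤ #{i ∈ s | f i ≤ a} + #{i ∈ s | a ≤ f i} := by
  classical
  calc #s = #{i ∈ s | f i ≤ a ∨ a ≤ f i} := by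
        rw [filter_true_of_mem fun i _ => le_total (f i) a]
    _ ≤ #{i ∈ s | f i ≤ a} + #{i ∈ s | a ≤ f i} := by
        rw [filter_or]
        exact card_union_le _ _

theorem card_mul_le_sum_of_subset [Semiring R] [PartialOrder R] [IsOrderedRing R]
    {s t : Finset ι} {f : ι → R} {a : R} (hst : s ⊆ t) (hf : ∀ i ∈ t, i ∉ s → 0 ≤ f i)
    (ha : ∀ i ∈ s, a ≤ f i) : #s * a ≤ ∑ i ∈ t, f i :=
  calc #s * a = #s • a := (nsmul_eq_mul _ _).symm
    _ ≤ ∑ i ∈ s, f i := card_nsmul_le_sum s f a ha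
    _ ≤ ∑ i ∈ t, f i := sum_le_sum_of_subset_of_nonneg hst hf

end Counting

/-- `a` is the `q`-quantile of the finite multiset `{f i : i ∈ s}`: it is one of the values, and
exactly `⌊q|s|⌋` of the values, counted with multiplicity, are at most `a`. It is a predicate, not a
function: no such `a` exists if `⌊q|s|⌋ = 0`, and ties among the values may rule it out too. -/
def IsQuantile {ι R : Type*} [LinearOrder R] (q : ℝ) (s : Finset ι) (f : ι → R) (a : R) : Prop :=
  (∃ i ∈ s, f i = a) ∧ #{i ∈ s | f i ≤ a} = ⌊q * #s⌋₊

namespace IsQuantile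

variable {ι R : Type*} [LinearOrder R] {q : ℝ} {s : Finset ι} {f : ι → R} {a : R}

theorem card_sub_floor_le_card_filter_ge (h : IsQuantile q s f a) :
    (#s : ℝ) - ⌊q * #s⌋₊ ≤ #{i ∈ s | a ≤ f i} := by
  rw [← h.2, sub_le_iff_le_add']
  exact_mod_cast card_le_card_filter_le_add_card_filter_ge s f a

theorem floor_le (h : IsQuantile q s f a) : (⌊q * #s⌋₊ : ℝ) ≤ q * #s := by
  obtain ⟨⟨i, hi, hia⟩, hcount⟩ := h
  -- The quantile counts itself, so the natural-number floor is not truncated at a negative `q`.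
  have hfloor : 0 < ⌊q * #s⌋₊ :=
    hcount ▸ card_pos.2 ⟨i, mem_filter.2 ⟨hi, hia.le⟩⟩
  exact Nat.floor_le (zero_le_one.trans (Nat.floor_pos.1 hfloor))

theorem one_sub_mul_card_le_card_filter_ge (h : IsQuantile q s f a) :
    (1 - q) * #s ≤ #{i ∈ s | a ≤ f i} := by
  linarith [h.card_sub_floor_le_card_filter_ge, h.floor_le]

theorem one_sub_mul_card_sub_card_le_card_filter_ge_sdiff [DecidableEq ι]
    (h : IsQuantile q s f a) (t : Finset ι) :
    (1 - q) * #s - #t ≤ #({i ∈ s | a ≤ f i} \ t) := by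
  have hsdiff : (#{i ∈ s | a ≤ f i} : ℝ) ≤ #({i ∈ s | a ≤ f i} \ t) + #t := by
    exact_mod_cast card_le_card_sdiff_add_card
  linarith [h.one_sub_mul_card_le_card_filter_ge]

theorem nonneg [Zero R] (h : IsQuantile q s f a) (hf : ∀ i ∈ s, 0 ≤ f i) : 0 ≤ a := by
  obtain ⟨⟨i, hi, rfl⟩, -⟩ := h
  exact hf i hi

end IsQuantile

theorem quantile_residual_sum_bound_general {ι : Type*} [DecidableEq ι] {τ C : Finset ι}
    {r : ι → ℝ} {m α β q γ : ℝ} (hr : ∀ i ∈ τ, 0 ≤ r i) (hγ : IsQuantile q τ r γ) (hq : q ≤ 1)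
    (hC : #C ≤ β * m) (hτ : α * m ≤ #τ) :
    γ ^ 2 * (m * (α * (1 - q) - β)) ≤ ∑ i ∈ τ \ C, r i ^ 2
    ∧ (#τ : ℝ) - ⌊q * #τ⌋₊ ≤ #{i ∈ τ | γ ≤ r i}
    ∧ m * (α * (1 - q) - β) ≤ #({i ∈ τ | γ ≤ r i} \ C) := by
  have hγ0 : 0 ≤ γ := hγ.nonneg hr
  have hcard : m * (α * (1 - q) - β) ≤ #({i ∈ τ | γ ≤ r i} \ C) :=
    calc m * (α * (1 - q) - β) = (1 - q) * (α * m) - β * m := by ring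
      _ ≤ (1 - q) * #τ - #C :=
          sub_le_sub (mul_le_mul_of_nonneg_left hτ (sub_nonneg.2 hq)) hC
      _ ≤ #({i ∈ τ | γ ≤ r i} \ C) := hγ.one_sub_mul_card_sub_card_le_card_filter_ge_sdiff C
  have hsq : ∀ i ∈ {i ∈ τ | γ ≤ r i} \ C, γ ^ 2 ≤ r i ^ 2 := fun i hi =>
    pow_le_pow_left₀ hγ0 (mem_filter.1 (mem_sdiff.1 hi).1).2 2
  refine ⟨?_, hγ.card_sub_floor_le_card_filter_ge, hcard⟩
  calc γ ^ 2 * (m * (α * (1 - q) - β))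
      ≤ γ ^ 2 * #({i ∈ τ | γ ≤ r i} \ C) := mul_le_mul_of_nonneg_left hcard (sq_nonneg γ)
    _ = #({i ∈ τ | γ ≤ r i} \ C) * γ ^ 2 := mul_comm _ _
    _ ≤ ∑ i ∈ τ \ C, r i ^ 2 :=
        card_mul_le_sum_of_subset (sdiff_subset_sdiff (filter_subset _ _) le_rfl)
          (fun i _ _ => sq_nonneg (r i)) hsq

/-- If `A` has unit-norm rows, `b = Ax`, `b̂ = b + c` with `c` supported on `C`, `|C| ≤ βm`,
`q ∈ (0,1)`, `α ∈ (0,1]` with `α(1-q) > β`, `|τ| = ⌈αm⌉`, and `γ` is the `q`-quantile of the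
residuals `{|⟨a_j, v⟩ - b̂_j|}_{j ∈ τ}`, then `γ² · m[α(1-q) - β] ≤ Σ_{i ∈ τ, i ∉ C} |⟨a_i, v⟩ - b̂_i|²`.
In particular, at least `⌈αm⌉ - ⌊q⌈αm⌉⌋` of the residuals indexed by `τ` are at least `γ`, and at
least `m[α(1-q) - β]` of these belong to uncorrupted equations. -/
theorem quantile_residual_sum_bound {m n : ℕ}
    (A : Matrix (Fin m) (Fin n) ℝ) (hrows : ∀ i, ∑ j, (A i j) ^ 2 = 1)
    (x : Fin n → ℝ) (b c bhat : Fin m → ℝ)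
    (hb : ∀ i, b i = ∑ j, A i j * x j)
    (hbhat : ∀ i, bhat i = b i + c i)
    (C : Finset (Fin m)) (hsupp : ∀ i, c i ≠ 0 → i ∈ C)
    (β : ℝ) (hC : (C.card : ℝ) ≤ β * (m : ℝ))
    (q : ℝ) (hq0 : 0 < q) (hq1 : q < 1)
    (α : ℝ) (hα0 : 0 < α) (hα1 : α ≤ 1)
    (hαqβ : β < α * (1 - q))
    (τ : Finset (Fin m)) (hτ : τ.card = ⌈α * (m : ℝ)⌉₊)
    (v : Fin n → ℝ) (γ : ℝ)
    (hγmem : ∃ i ∈ τ, |(∑ j, A i j * v j) - bhat i| = γ)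
    (hγcount : (τ.filter (fun i => |(∑ j, A i j * v j) - bhat i| ≤ γ)).card
      = ⌊q * (τ.card : ℝ)⌋₊) :
    γ ^ 2 * ((m : ℝ) * (α * (1 - q) - β))
      ≤ ∑ i ∈ τ \ C, |(∑ j, A i j * v j) - bhat i| ^ 2
    ∧ (τ.card : ℝ) - (⌊q * (τ.card : ℝ)⌋₊ : ℝ)
      ≤ ((τ.filter (fun i => γ ≤ |(∑ j, A i j * v j) - bhat i|)).card : ℝ)
    ∧ (m : ℝ) * (α * (1 - q) - β)
      ≤ (((τ.filter (fun i => γ ≤ |(∑ j, A i j * v j) - bhat i|)) \ C).card : ℝ) :=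
  quantile_residual_sum_bound_general (fun _ _ => abs_nonneg _) ⟨hγmem, hγcount⟩ hq1.le hC
    (hτ ▸ Nat.le_ceil _)
end

section
/- Let A ∈ ℝ^{m×n} have unit-norm rows a_1,…,a_m, let x, x_k ∈ ℝ^n, b = Ax, and let b̂ = b + c where c is supported on C ⊆ {1,…,m} with |C| ≤ βm. Fix q ∈ (0,1), α ∈ (0,1] with α(1−q) > β. Let S ⊆ C be a nonempty set of corrupted indices such that every i ∈ S satisfies |⟨a_i, x_k⟩ − b̂_i| ≤ σ_max(A)/√(m[α(1−q) − β]) · ‖x_k − x‖. For i ∈ S define x_{k+1}(i) = x_k + (b̂_i − ⟨a_i, x_k⟩) a_i. Then the average approximation error over S satisfies (1/|S|) Σ_{i ∈ S} ‖x_{k+1}(i) − x‖² ≤ r_C ‖x_k − x‖², where r_C = 1 + (2/√|S|)·σ_max(A)²/√(m[α(1−q) − β]) + σ_max(A)²/(m[α(1−q) − β]). -/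
open Finset

/-!
Put `e = x_k - x` and `r_i = b̂_i - ⟨a_i, x_k⟩`, so that the update along `a_i` turns the error into
`e + r_i a_i`, with `‖e + r_i a_i‖² = ‖e‖² + 2 r_i ⟨a_i, e⟩ + r_i²`. Bounding each cross term
separately would lose a factor `√|S|`; instead Cauchy–Schwarz is applied to
`∑_{i ∈ S} r_i ⟨a_i, e⟩`, because the `⟨a_i, e⟩` are coordinates of `A e`, whence
`∑_{i ∈ S} ⟨a_i, e⟩² ≤ σ_max(A)² ‖e‖²`.
-/

theorem sum_mul_le_sqrt_card_mul_of_abs_le {ι : Type*} {S : Finset ι} {r t : ι → ℝ} {ρ : ℝ}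
    (hr : ∀ i ∈ S, |r i| ≤ ρ) :
    ∑ i ∈ S, r i * t i ≤ √(#S) * (ρ * √(∑ i ∈ S, t i ^ 2)) := by
  rcases S.eq_empty_or_nonempty with rfl | ⟨i₀, hi₀⟩
  · simp
  have hρ : 0 ≤ ρ := (abs_nonneg _).trans (hr i₀ hi₀)
  have hsum : ∑ i ∈ S, r i ^ 2 ≤ #S * ρ ^ 2 := by
    rw [← nsmul_eq_mul]
    exact sum_le_card_nsmul _ _ _ fun i hi => sq_le_sq.2 ((hr i hi).trans (le_abs_self ρ))
  calc ∑ i ∈ S, r i * t i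
      ≤ √(∑ i ∈ S, r i ^ 2) * √(∑ i ∈ S, t i ^ 2) := Real.sum_mul_le_sqrt_mul_sqrt S r t
    _ ≤ √(#S * ρ ^ 2) * √(∑ i ∈ S, t i ^ 2) := by gcongr
    _ = √(#S) * (ρ * √(∑ i ∈ S, t i ^ 2)) := by
      rw [Real.sqrt_mul (Nat.cast_nonneg _), Real.sqrt_sq hρ, mul_assoc]

section InnerProductSpace

open scoped RealInnerProductSpace

variable {ι E : Type*} [SeminormedAddCommGroup E] [InnerProductSpace ℝ E]

theorem norm_add_smul_sq_le {a e : E} {r ρ : ℝ} (ha : ‖a‖ ≤ 1) (hr : |r| ≤ ρ) :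
    ‖e + r • a‖ ^ 2 ≤ ‖e‖ ^ 2 + 2 * (r * ⟪a, e⟫) + ρ ^ 2 := by
  have hnorm : ‖r • a‖ ≤ ρ := by
    rw [norm_smul, Real.norm_eq_abs]
    exact (mul_le_of_le_one_right (abs_nonneg r) ha).trans hr
  rw [norm_add_sq_real, real_inner_smul_right, real_inner_comm]
  gcongr

theorem average_norm_add_smul_sq_le {S : Finset ι} (hS : S.Nonempty) {a : ι → E} {e : E}
    {r : ι → ℝ} {ρ τ : ℝ} (ha : ∀ i ∈ S, ‖a i‖ ≤ 1) (hr : ∀ i ∈ S, |r i| ≤ ρ)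
    (hτ : √(∑ i ∈ S, ⟪a i, e⟫ ^ 2) ≤ τ) :
    1 / (#S : ℝ) * ∑ i ∈ S, ‖e + r i • a i‖ ^ 2 ≤ ‖e‖ ^ 2 + 2 / √(#S) * (ρ * τ) + ρ ^ 2 := by
  have hρ : 0 ≤ ρ := hS.elim fun i hi => (abs_nonneg _).trans (hr i hi)
  have hcard : (#S : ℝ) ≠ 0 := Nat.cast_ne_zero.2 hS.card_ne_zero
  have hcross : ∑ i ∈ S, r i * ⟪a i, e⟫ ≤ √(#S) * (ρ * τ) :=
    (sum_mul_le_sqrt_card_mul_of_abs_le hr).trans (by gcongr)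
  have hsum : ∑ i ∈ S, ‖e + r i • a i‖ ^ 2
      ≤ #S * ‖e‖ ^ 2 + 2 * (√(#S) * (ρ * τ)) + #S * ρ ^ 2 := calc
    _ ≤ ∑ i ∈ S, (‖e‖ ^ 2 + 2 * (r i * ⟪a i, e⟫) + ρ ^ 2) :=
      sum_le_sum fun i hi => norm_add_smul_sq_le (ha i hi) (hr i hi)
    _ = #S * ‖e‖ ^ 2 + 2 * ∑ i ∈ S, r i * ⟪a i, e⟫ + #S * ρ ^ 2 := by
      simp only [sum_add_distrib, sum_const, nsmul_eq_mul, ← mul_sum]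
    _ ≤ _ := by gcongr
  calc 1 / (#S : ℝ) * ∑ i ∈ S, ‖e + r i • a i‖ ^ 2
      ≤ 1 / (#S : ℝ) * (#S * ‖e‖ ^ 2 + 2 * (√(#S) * (ρ * τ)) + #S * ρ ^ 2) := by gcongr
    _ = ‖e‖ ^ 2 + 2 * (√(#S) / #S) * (ρ * τ) + ρ ^ 2 := by field_simp
    _ = ‖e‖ ^ 2 + 2 / √(#S) * (ρ * τ) + ρ ^ 2 := by rw [Real.sqrt_div_self', mul_one_div]

end InnerProductSpace

section L2OpNorm

open scoped Matrix.Norms.L2Operator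

theorem sigmaMax_eq_l2_opNorm {m n : ℕ} (A : Matrix (Fin m) (Fin n) ℝ) : sigmaMax A = ‖A‖ := by
  rw [Matrix.l2_opNorm_def, ← ContinuousLinearMap.sSup_sphere_eq_norm, sigmaMax]
  congr 1
  ext r
  constructor
  · rintro ⟨y, hy, rfl⟩
    refine ⟨WithLp.toLp 2 y, by simp [EuclideanSpace.norm_eq, hy], ?_⟩
    simp [EuclideanSpace.norm_eq, Matrix.mulVec, dotProduct]
  · rintro ⟨y, hy, rfl⟩
    refine ⟨y, ?_, by simp [EuclideanSpace.norm_eq, Matrix.mulVec, dotProduct]⟩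
    rw [← EuclideanSpace.real_norm_sq_eq, mem_sphere_zero_iff_norm.1 hy, one_pow]

variable {ι κ : Type*} [Fintype ι] [Fintype κ] [DecidableEq κ]

theorem sqrt_sum_inner_row_sq_le (A : Matrix ι κ ℝ) (S : Finset ι) (e : EuclideanSpace ℝ κ) :
    √(∑ i ∈ S, inner ℝ (WithLp.toLp 2 (A i)) e ^ 2) ≤ ‖A‖ * ‖e‖ := by
  calc √(∑ i ∈ S, inner ℝ (WithLp.toLp 2 (A i)) e ^ 2)
      ≤ √(∑ i, inner ℝ (WithLp.toLp 2 (A i)) e ^ 2) :=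
        Real.sqrt_le_sqrt (sum_le_univ_sum_of_nonneg fun _ => sq_nonneg _)
    _ = ‖(EuclideanSpace.equiv ι ℝ).symm (A.mulVec e)‖ := by
      simp [EuclideanSpace.norm_eq, EuclideanSpace.inner_eq_star_dotProduct, Matrix.mulVec,
        dotProduct_comm]
    _ ≤ ‖A‖ * ‖e‖ := A.l2_opNorm_mulVec e

theorem corrupted_projection_general (A : Matrix ι κ ℝ) (x xk : κ → ℝ) (bhat : ι → ℝ) {S : Finset ι}
    (hS : S.Nonempty) (hrows : ∀ i ∈ S, ∑ j, A i j ^ 2 ≤ 1) {η : ℝ}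
    (hres : ∀ i ∈ S, |(∑ j, A i j * xk j) - bhat i| ≤ η * √(∑ j, (xk j - x j) ^ 2)) :
    1 / (#S : ℝ) *
        ∑ i ∈ S, ∑ j, ((xk j + (bhat i - ∑ j', A i j' * xk j') * A i j) - x j) ^ 2
      ≤ (1 + 2 / √(#S) * (η * ‖A‖) + η ^ 2) * ∑ j, (xk j - x j) ^ 2 := by
  let e : EuclideanSpace ℝ κ := WithLp.toLp 2 (xk - x)
  let a (i : ι) : EuclideanSpace ℝ κ := WithLp.toLp 2 (A i)
  let r (i : ι) : ℝ := bhat i - ∑ j, A i j * xk j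
  have herror : ∑ j, (xk j - x j) ^ 2 = ‖e‖ ^ 2 := by
    simp [e, EuclideanSpace.real_norm_sq_eq]
  have hupdate (i : ι) :
      ∑ j, ((xk j + (bhat i - ∑ j', A i j' * xk j') * A i j) - x j) ^ 2 = ‖e + r i • a i‖ ^ 2 := by
    simp [e, a, r, EuclideanSpace.real_norm_sq_eq, add_sub_right_comm]
  have hrow : ∀ i ∈ S, ‖a i‖ ≤ 1 := fun i hi => by
    simpa [a, EuclideanSpace.norm_eq] using hrows i hi
  have hresidual : ∀ i ∈ S, |r i| ≤ η * ‖e‖ := fun i hi => by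
    simpa only [r, abs_sub_comm, herror, Real.sqrt_sq (norm_nonneg e)] using hres i hi
  simp only [herror, hupdate]
  calc 1 / (#S : ℝ) * ∑ i ∈ S, ‖e + r i • a i‖ ^ 2
      ≤ ‖e‖ ^ 2 + 2 / √(#S) * (η * ‖e‖ * (‖A‖ * ‖e‖)) + (η * ‖e‖) ^ 2 :=
        average_norm_add_smul_sq_le hS hrow hresidual (sqrt_sum_inner_row_sq_le A S e)
    _ = (1 + 2 / √(#S) * (η * ‖A‖) + η ^ 2) * ‖e‖ ^ 2 := by ring

end L2OpNorm

/-- **Projection onto accepted corrupted equations (Lemma 2).**  If `A` has unit-norm rows,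
`b = Ax`, `b̂ = b + c` with `c` supported on `C`, `|C| ≤ βm`, `q ∈ (0,1)`, `α ∈ (0,1]` with
`α(1-q) > β`, and `S ⊆ C` is a nonempty set of corrupted indices whose residuals at `x_k` are
all at most `σ_max(A)/√(m[α(1-q) - β]) · ‖x_k - x‖`, then the average squared error over the
Kaczmarz updates `x_{k+1}(i) = x_k + (b̂_i - ⟨a_i, x_k⟩) a_i`, `i ∈ S`, satisfies
`(1/|S|) Σ_{i ∈ S} ‖x_{k+1}(i) - x‖² ≤ r_C ‖x_k - x‖²` with
`r_C = 1 + (2/√|S|)·σ_max(A)²/√(m[α(1-q) - β]) + σ_max(A)²/(m[α(1-q) - β])`. -/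
theorem corrupted_projection {m n : ℕ}
    (A : Matrix (Fin m) (Fin n) ℝ) (hrows : ∀ i, ∑ j, (A i j) ^ 2 = 1)
    (x xk : Fin n → ℝ) (b c bhat : Fin m → ℝ)
    (hb : ∀ i, b i = ∑ j, A i j * x j)
    (hbhat : ∀ i, bhat i = b i + c i)
    (C : Finset (Fin m)) (hsupp : ∀ i, c i ≠ 0 → i ∈ C)
    (β : ℝ) (hC : (C.card : ℝ) ≤ β * (m : ℝ))
    (q : ℝ) (hq0 : 0 < q) (hq1 : q < 1)
    (α : ℝ) (hα0 : 0 < α) (hα1 : α ≤ 1)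
    (hαqβ : β < α * (1 - q))
    (S : Finset (Fin m)) (hSC : S ⊆ C) (hS : S.Nonempty)
    (hres : ∀ i ∈ S, |(∑ j, A i j * xk j) - bhat i|
      ≤ sigmaMax A / Real.sqrt ((m : ℝ) * (α * (1 - q) - β)) *
          Real.sqrt (∑ j, (xk j - x j) ^ 2)) :
    (1 / (S.card : ℝ)) *
        ∑ i ∈ S, ∑ j, ((xk j + (bhat i - ∑ j', A i j' * xk j') * A i j) - x j) ^ 2
      ≤ (1 + 2 / Real.sqrt (S.card : ℝ) *
            (sigmaMax A ^ 2 / Real.sqrt ((m : ℝ) * (α * (1 - q) - β))) +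
          sigmaMax A ^ 2 / ((m : ℝ) * (α * (1 - q) - β))) *
        ∑ j, (xk j - x j) ^ 2 := by
  have hD : 0 ≤ (m : ℝ) * (α * (1 - q) - β) :=
    mul_nonneg (Nat.cast_nonneg m) (sub_nonneg.2 hαqβ.le)
  rw [sigmaMax_eq_l2_opNorm] at hres ⊢
  refine (corrupted_projection_general A x xk bhat hS (fun i _ => (hrows i).le) hres).trans_eq ?_
  rw [div_pow, Real.sq_sqrt hD]
  ring
end

section
/- Let A ∈ ℝ^{m×n} (m > n) be a full-rank matrix with unit-norm rows a_1,…,a_m, let x, x_k ∈ ℝ^n, b = Ax. Fix q ∈ (0,1), α ∈ (0,1], β ≥ 0 with αq > β. Let T ⊆ {1,…,m} be a set of uncorrupted indices (so b̂_i = b_i = ⟨a_i,x⟩ for all i ∈ T) with (αq − β)m ≤ |T| ≤ αqm. For i ∈ T define x_{k+1}(i) = x_k + (b_i − ⟨a_i, x_k⟩) a_i. Then (1/|T|) Σ_{i ∈ T} ‖x_{k+1}(i) − x‖² ≤ r_G ‖x_k − x‖², where r_G = 1 − σ_{α,q,β,min}(A)²/(αqm). -/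
open Finset

/-- The smallest singular value of the row submatrix `A_S`:
`inf_{x ≠ 0} ‖A_S x‖ / ‖x‖`. -/
noncomputable def sigmaMinSub {m n : ℕ} (A : Matrix (Fin m) (Fin n) ℝ)
    (S : Finset (Fin m)) : ℝ :=
  sInf {r : ℝ | ∃ x : Fin n → ℝ, x ≠ 0 ∧
    r = Real.sqrt (∑ i ∈ S, (∑ j, A i j * x j) ^ 2) / Real.sqrt (∑ j, (x j) ^ 2)}

/-- `σ_{α,q,β,min}(A)`: the minimum over all row subsets `S` with `|S|/m ≥ αq - β` of the
smallest singular value of `A_S`. -/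
noncomputable def sigmaQMin {m n : ℕ} (A : Matrix (Fin m) (Fin n) ℝ) (α q β : ℝ) : ℝ :=
  sInf {r : ℝ | ∃ S : Finset (Fin m), α * q - β ≤ (S.card : ℝ) / (m : ℝ) ∧ r = sigmaMinSub A S}

/-!
The error of a Kaczmarz step onto a consistent equation with unit row `a` is the old error minus its
orthogonal projection onto `a`, so by Pythagoras its squared norm drops by exactly
`⟨a, x_k - x⟩²`. Averaging over `T`, the squared error drops by `‖A_T (x_k - x)‖² / |T|`. Since `T`
is admissible in the minimum defining `σ = σ_{α,q,β,min}(A)`, this is at least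
`σ² ‖x_k - x‖² / |T|`, and `|T| ≤ αqm`.
-/

open scoped Matrix

section KaczmarzStep

variable {ι κ R : Type*} [Fintype ι]

/-- The Kaczmarz update of the iterate `z` for the equation `⟨a, y⟩ = c`. There is no division by
`‖a‖²`, so it is the orthogonal projection onto the solution hyperplane only for a unit row `a`. -/
def kaczmarzStep [Ring R] (a : ι → R) (c : R) (z : ι → R) : ι → R :=
  fun j => z j + (c - a ⬝ᵥ z) * a j

theorem kaczmarzStep_sub_apply [Ring R] {a x : ι → R} {c : R} (hc : c = a ⬝ᵥ x)
    (z : ι → R) (j : ι) :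
    kaczmarzStep a c z j - x j = (z - x) j - (a ⬝ᵥ (z - x)) * a j := by
  rw [kaczmarzStep, hc, dotProduct_sub, Pi.sub_apply]
  noncomm_ring

theorem sum_sub_dotProduct_mul_sq [CommRing R] {a : ι → R} (ha : ∑ j, a j ^ 2 = 1)
    (v : ι → R) :
    ∑ j, (v j - (a ⬝ᵥ v) * a j) ^ 2 = ∑ j, v j ^ 2 - (a ⬝ᵥ v) ^ 2 := by
  calc ∑ j, (v j - (a ⬝ᵥ v) * a j) ^ 2
      = ∑ j, (v j ^ 2 - 2 * (a ⬝ᵥ v) * (a j * v j) + (a ⬝ᵥ v) ^ 2 * a j ^ 2) :=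
        sum_congr rfl fun j _ => by ring
    _ = ∑ j, v j ^ 2 - 2 * (a ⬝ᵥ v) * (a ⬝ᵥ v) + (a ⬝ᵥ v) ^ 2 * ∑ j, a j ^ 2 := by
        rw [sum_add_distrib, sum_sub_distrib, ← mul_sum, ← mul_sum, dotProduct]
    _ = ∑ j, v j ^ 2 - (a ⬝ᵥ v) ^ 2 := by rw [ha]; ring

theorem sum_kaczmarzStep_sub_sq [CommRing R] {a x : ι → R} {c : R} (ha : ∑ j, a j ^ 2 = 1)
    (hc : c = a ⬝ᵥ x) (z : ι → R) :
    ∑ j, (kaczmarzStep a c z j - x j) ^ 2 = ∑ j, (z j - x j) ^ 2 - (a ⬝ᵥ (z - x)) ^ 2 := by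
  simp_rw [kaczmarzStep_sub_apply hc, sum_sub_dotProduct_mul_sq ha, Pi.sub_apply]

theorem average_kaczmarzStep_sub_sq [Field R] [CharZero R] {T : Finset κ} (hT : T.Nonempty)
    {a : κ → ι → R} {x : ι → R} {c : κ → R} (ha : ∀ i ∈ T, ∑ j, a i j ^ 2 = 1)
    (hc : ∀ i ∈ T, c i = a i ⬝ᵥ x) (z : ι → R) :
    (1 / (#T : R)) * ∑ i ∈ T, ∑ j, (kaczmarzStep (a i) (c i) z j - x j) ^ 2 =
      ∑ j, (z j - x j) ^ 2 - (∑ i ∈ T, (a i ⬝ᵥ (z - x)) ^ 2) / #T := by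
  have hcard : (#T : R) ≠ 0 := Nat.cast_ne_zero.2 hT.card_ne_zero
  rw [sum_congr rfl fun i hi => sum_kaczmarzStep_sub_sq (ha i hi) (hc i hi) z,
    sum_sub_distrib, sum_const, nsmul_eq_mul]
  field_simp

end KaczmarzStep

section SmallestSingularValue

variable {m n : ℕ} (A : Matrix (Fin m) (Fin n) ℝ)

theorem sigmaMinSub_nonneg (S : Finset (Fin m)) : 0 ≤ sigmaMinSub A S := by
  apply Real.sInf_nonneg
  rintro _ ⟨v, -, rfl⟩
  positivity

theorem sigmaMinSub_le_div (S : Finset (Fin m)) {v : Fin n → ℝ} (hv : v ≠ 0) :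
    sigmaMinSub A S ≤ √(∑ i ∈ S, (A i ⬝ᵥ v) ^ 2) / √(∑ j, v j ^ 2) := by
  refine csInf_le ⟨0, ?_⟩ ⟨v, hv, rfl⟩
  rintro _ ⟨w, -, rfl⟩
  positivity

theorem sigmaMinSub_sq_mul_le (S : Finset (Fin m)) (v : Fin n → ℝ) :
    sigmaMinSub A S ^ 2 * ∑ j, v j ^ 2 ≤ ∑ i ∈ S, (A i ⬝ᵥ v) ^ 2 := by
  rcases eq_or_ne v 0 with rfl | hv
  · simp
  have hv_pos : 0 < ∑ j, v j ^ 2 := by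
    obtain ⟨j, hj⟩ := Function.ne_iff.1 hv
    exact sum_pos' (fun _ _ => sq_nonneg _) ⟨j, mem_univ j, sq_pos_of_ne_zero hj⟩
  have h := pow_le_pow_left₀ (sigmaMinSub_nonneg A S) (sigmaMinSub_le_div A S hv) 2
  rwa [div_pow, Real.sq_sqrt (by positivity), Real.sq_sqrt hv_pos.le, le_div_iff₀ hv_pos] at h

theorem sigmaQMin_nonneg (α q β : ℝ) : 0 ≤ sigmaQMin A α q β := by
  apply Real.sInf_nonneg
  rintro _ ⟨S, -, rfl⟩
  exact sigmaMinSub_nonneg A S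

theorem sigmaQMin_le_sigmaMinSub {α q β : ℝ} {S : Finset (Fin m)}
    (hS : α * q - β ≤ (#S : ℝ) / m) : sigmaQMin A α q β ≤ sigmaMinSub A S := by
  refine csInf_le ⟨0, ?_⟩ ⟨S, hS, rfl⟩
  rintro _ ⟨S', -, rfl⟩
  exact sigmaMinSub_nonneg A S'

theorem sigmaQMin_sq_mul_le {α q β : ℝ} {S : Finset (Fin m)}
    (hS : α * q - β ≤ (#S : ℝ) / m) (v : Fin n → ℝ) :
    sigmaQMin A α q β ^ 2 * ∑ j, v j ^ 2 ≤ ∑ i ∈ S, (A i ⬝ᵥ v) ^ 2 :=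
  calc sigmaQMin A α q β ^ 2 * ∑ j, v j ^ 2
      ≤ sigmaMinSub A S ^ 2 * ∑ j, v j ^ 2 := by
        gcongr
        · exact sigmaQMin_nonneg A α q β
        · exact sigmaQMin_le_sigmaMinSub A hS
    _ ≤ ∑ i ∈ S, (A i ⬝ᵥ v) ^ 2 := sigmaMinSub_sq_mul_le A S v

end SmallestSingularValue

theorem uncorrupted_projection_general {m n : ℕ} {A : Matrix (Fin m) (Fin n) ℝ}
    {x : Fin n → ℝ} {b : Fin m → ℝ} {α q β : ℝ} {T : Finset (Fin m)} (hT : T.Nonempty)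
    (hrows : ∀ i ∈ T, ∑ j, A i j ^ 2 = 1) (hb : ∀ i ∈ T, b i = A i ⬝ᵥ x)
    (hT1 : (α * q - β) * m ≤ #T) (hT2 : #T ≤ α * q * m) (xk : Fin n → ℝ) :
    (1 / (#T : ℝ)) * ∑ i ∈ T, ∑ j, (kaczmarzStep (A i) (b i) xk j - x j) ^ 2 ≤
      (1 - sigmaQMin A α q β ^ 2 / (α * q * m)) * ∑ j, (xk j - x j) ^ 2 := by
  have hm : (0 : ℝ) < m := Nat.cast_pos.2 hT.choose.pos
  have hcard : (0 : ℝ) < #T := Nat.cast_pos.2 hT.card_pos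
  have hsigma : sigmaQMin A α q β ^ 2 * ∑ j, (xk j - x j) ^ 2 ≤
      ∑ i ∈ T, (A i ⬝ᵥ (xk - x)) ^ 2 :=
    sigmaQMin_sq_mul_le A ((le_div_iff₀ hm).2 hT1) (xk - x)
  calc (1 / (#T : ℝ)) * ∑ i ∈ T, ∑ j, (kaczmarzStep (A i) (b i) xk j - x j) ^ 2
      = ∑ j, (xk j - x j) ^ 2 - (∑ i ∈ T, (A i ⬝ᵥ (xk - x)) ^ 2) / #T :=
        average_kaczmarzStep_sub_sq hT hrows hb xk
    _ ≤ ∑ j, (xk j - x j) ^ 2 -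
          sigmaQMin A α q β ^ 2 * (∑ j, (xk j - x j) ^ 2) / (α * q * m) :=
        sub_le_sub_left (div_le_div₀ (by positivity) hsigma hcard hT2) _
    _ = (1 - sigmaQMin A α q β ^ 2 / (α * q * m)) * ∑ j, (xk j - x j) ^ 2 := by ring

/-- **Projection onto accepted uncorrupted equations (Lemma 3).**  If `A` is a full-rank
row-normalized `m × n` matrix (`m > n`), `b = Ax`, `q ∈ (0,1)`, `α ∈ (0,1]`, `β ≥ 0` with
`αq > β`, and `T` is a set of uncorrupted indices (`b̂_i = b_i = ⟨a_i, x⟩` on `T`) with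
`(αq - β)m ≤ |T| ≤ αqm`, then the average squared error over the Kaczmarz updates
`x_{k+1}(i) = x_k + (b_i - ⟨a_i, x_k⟩) a_i`, `i ∈ T`, satisfies
`(1/|T|) Σ_{i ∈ T} ‖x_{k+1}(i) - x‖² ≤ (1 - σ_{α,q,β,min}(A)²/(αqm)) ‖x_k - x‖²`. -/
theorem uncorrupted_projection {m n : ℕ} (hmn : n < m)
    (A : Matrix (Fin m) (Fin n) ℝ) (hrank : A.rank = n)
    (hrows : ∀ i, ∑ j, (A i j) ^ 2 = 1)
    (x xk : Fin n → ℝ) (b bhat : Fin m → ℝ)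
    (hb : ∀ i, b i = ∑ j, A i j * x j)
    (q : ℝ) (hq0 : 0 < q) (hq1 : q < 1)
    (α : ℝ) (hα0 : 0 < α) (hα1 : α ≤ 1)
    (β : ℝ) (hβ : 0 ≤ β) (hαqβ : β < α * q)
    (T : Finset (Fin m))
    (hhat : ∀ i ∈ T, bhat i = b i)
    (hT1 : (α * q - β) * (m : ℝ) ≤ (T.card : ℝ))
    (hT2 : (T.card : ℝ) ≤ α * q * (m : ℝ)) :
    (1 / (T.card : ℝ)) *
        ∑ i ∈ T, ∑ j, ((xk j + (b i - ∑ j', A i j' * xk j') * A i j) - x j) ^ 2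
      ≤ (1 - sigmaQMin A α q β ^ 2 / (α * q * (m : ℝ))) * ∑ j, (xk j - x j) ^ 2 := by
  have hcard : (0 : ℝ) < #T :=
    (mul_pos (sub_pos.2 hαqβ) (Nat.cast_pos.2 (Nat.zero_lt_of_lt hmn))).trans_le hT1
  exact uncorrupted_projection_general (card_pos.1 (Nat.cast_pos.1 hcard)) (fun i _ => hrows i)
    (fun i _ => hb i) hT1 hT2 xk
end
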